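/- For all n ≥ 0, A_{2n+1}(p,−1) = ((p−1)/2)^n · E_{2n+1}, where A_m(p,q) is the refined Eulerian polynomial and E_m is the Euler number. -/

import Mathlib

open Finset

/-- The set of (0-based) descent indices of a permutation of `Fin n`:
`i` is a descent index if `π i > π (i+1)` (so the 1-based descent position is `i+1`). -/
def descentSet {n : ℕ} (π : Equiv.Perm (Fin n)) : Finset ℕ :=
  (Finset.range n).filter
    (fun i => ∃ h : i + 1 < n, π ⟨i + 1, h⟩ < π ⟨i, Nat.lt_of_succ_lt h⟩)

/-- The number of descents of `π`. -/
def des {n : ℕ} (π : Equiv.Perm (Fin n)) : ℕ := (descentSet π).card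

/-- The number of descents of `π` at odd (1-based) positions, i.e. even 0-based indices. -/
def odes {n : ℕ} (π : Equiv.Perm (Fin n)) : ℕ :=
  ((descentSet π).filter (fun i => Even i)).card

/-- The number of descents of `π` at even (1-based) positions, i.e. odd 0-based indices. -/
def edes {n : ℕ} (π : Equiv.Perm (Fin n)) : ℕ :=
  ((descentSet π).filter (fun i => Odd i)).card

/-- The refined Eulerian polynomial `A_n(p,q) = Σ_π p^{odes π} q^{edes π}`. -/
def refinedEulerian (n : ℕ) (p q : ℝ) : ℝ :=
  ∑ π : Equiv.Perm (Fin n), p ^ odes π * q ^ edes π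

/-- The Eulerian polynomial `A_n(q) = Σ_π q^{des π}` as a function. -/
def eulerianEval (n : ℕ) (q : ℝ) : ℝ :=
  ∑ π : Equiv.Perm (Fin n), q ^ des π

/-- The Eulerian polynomial `A_n(q)` as a polynomial. -/
noncomputable def eulerianPolynomial (n : ℕ) : Polynomial ℝ :=
  ∑ π : Equiv.Perm (Fin n), Polynomial.X ^ des π

/-- The Eulerian number `A_{n,k}`: the number of permutations of `[n]` with `k` descents. -/
def eulerianNumber (n k : ℕ) : ℕ :=
  (Finset.univ.filter (fun π : Equiv.Perm (Fin n) => des π = k)).card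

/-- A permutation `a_1 a_2 … a_n` is alternating if `a_1 > a_2 < a_3 > ⋯`. -/
def IsAlternating {n : ℕ} (π : Equiv.Perm (Fin n)) : Prop :=
  ∀ i : ℕ, ∀ h : i + 1 < n,
    (π ⟨i + 1, h⟩ < π ⟨i, Nat.lt_of_succ_lt h⟩ ↔ Even i)

open scoped Classical in
/-- The Euler number `E_n`: the number of alternating permutations of `[n]`. -/
noncomputable def eulerNumber (n : ℕ) : ℕ :=
  (Finset.univ.filter (fun π : Equiv.Perm (Fin n) => IsAlternating π)).card

/-- `a_{n,k}`: the number of permutations of `[n]` with `k` even descents and no odd descents. -/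
def aNum (n k : ℕ) : ℕ :=
  (Finset.univ.filter (fun π : Equiv.Perm (Fin n) => edes π = k ∧ odes π = 0)).card

/-- The permutation of `Fin (n + 2)` with last value `j` whose other values are in the same
relative order as those of `σ`. -/
def snocPerm {n : ℕ} (j : Fin (n + 2)) (σ : Equiv.Perm (Fin (n + 1))) :
    Equiv.Perm (Fin (n + 2)) :=
  finSuccEquivLast.trans ((Equiv.optionCongr σ).trans (finSuccEquiv' j).symm)

@[simp]
lemma snocPerm_last {n : ℕ} (j : Fin (n + 2)) (σ : Equiv.Perm (Fin (n + 1))) :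
    snocPerm j σ (Fin.last (n + 1)) = j := by
  simp [snocPerm]

@[simp]
lemma snocPerm_castSucc {n : ℕ} (j : Fin (n + 2)) (σ : Equiv.Perm (Fin (n + 1)))
    (i : Fin (n + 1)) : snocPerm j σ i.castSucc = j.succAbove (σ i) := by
  simp [snocPerm]

lemma snocPerm_bijective (n : ℕ) :
    Function.Bijective (fun x : Fin (n + 2) × Equiv.Perm (Fin (n + 1)) => snocPerm x.1 x.2) := by
  rw [Fintype.bijective_iff_injective_and_card]
  constructor
  · rintro ⟨j, σ⟩ ⟨k, τ⟩ h
    have hjk : j = k := by simpa using congrArg (fun π => π (Fin.last (n + 1))) h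
    subst hjk
    have hστ : σ = τ := by
      ext i : 1
      simpa using congrArg (fun π => π i.castSucc) h
    rw [hστ]
  · simp [Fintype.card_perm, Nat.factorial_succ]

/-- The weight of a permutation: the product over all positions `i` of `d i` or `a i`, according
to whether `i` is a descent or an ascent. -/
def descentWeight (d a : ℕ → ℝ) {n : ℕ} (π : Equiv.Perm (Fin (n + 1))) : ℝ :=
  ∏ i : Fin n, if π i.succ < π i.castSucc then d i else a i

/-- The effect of appending one more letter on the distribution `f` of the last value: a descent
is weighted by `d`, an ascent by `a`. -/
def transfer (m : ℕ) (d a : ℝ) (f : ℕ → ℝ) (j : ℕ) : ℝ :=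
  ∑ i ∈ range m, (if j ≤ i then d else a) * f i

/-- The total weight of the permutations of `Fin (n + 1)` with a given last value. -/
def lastValueWeight (d a : ℕ → ℝ) : ℕ → ℕ → ℝ
  | 0 => fun _ => 1
  | n + 1 => transfer (n + 1) (d n) (a n) (lastValueWeight d a n)

lemma descentWeight_snocPerm (d a : ℕ → ℝ) {n : ℕ} (j : Fin (n + 2))
    (σ : Equiv.Perm (Fin (n + 1))) :
    descentWeight d a (snocPerm j σ) =
      descentWeight d a σ * if (j : ℕ) ≤ σ (Fin.last n) then d n else a n := by
  unfold descentWeight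
  rw [Fin.prod_univ_castSucc]
  congr 1
  · refine Finset.prod_congr rfl fun i _ => ?_
    rw [← Fin.castSucc_succ, snocPerm_castSucc, snocPerm_castSucc]
    simp only [Fin.succAbove_lt_succAbove_iff, Fin.val_castSucc]
  · rw [Fin.succ_last, snocPerm_last, snocPerm_castSucc]
    simp only [Fin.lt_succAbove_iff_le_castSucc, Fin.le_def, Fin.val_castSucc, Fin.val_last]

lemma sum_descentWeight_mul (d a : ℕ → ℝ) (n : ℕ) (φ : ℕ → ℝ) :
    ∑ π : Equiv.Perm (Fin (n + 1)), descentWeight d a π * φ (π (Fin.last n)) =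
      ∑ j ∈ range (n + 1), lastValueWeight d a n j * φ j := by
  induction n generalizing φ with
  | zero => simp [descentWeight, lastValueWeight]
  | succ n ih =>
    rw [← (snocPerm_bijective n).sum_comp, Fintype.sum_prod_type, ← Fin.sum_univ_eq_sum_range]
    refine Finset.sum_congr rfl fun j _ => ?_
    simp only [descentWeight_snocPerm, snocPerm_last]
    rw [← Finset.sum_mul, ih fun i => if (j : ℕ) ≤ i then d n else a n]
    simp only [lastValueWeight, transfer, mul_comm]

lemma sum_descentWeight (d a : ℕ → ℝ) (n : ℕ) :
    ∑ π : Equiv.Perm (Fin (n + 1)), descentWeight d a π =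
      ∑ j ∈ range (n + 1), lastValueWeight d a n j := by
  simpa using sum_descentWeight_mul d a n 1

lemma mem_descentSet_iff {n : ℕ} (π : Equiv.Perm (Fin (n + 1))) (i : Fin n) :
    (i : ℕ) ∈ descentSet π ↔ π i.succ < π i.castSucc := by
  have hi := i.isLt
  simp only [descentSet, Finset.mem_filter, Finset.mem_range]
  constructor
  · rintro ⟨-, h, hd⟩
    exact hd
  · intro h
    exact ⟨by omega, by omega, h⟩

lemma descentSet_subset_range {n : ℕ} (π : Equiv.Perm (Fin (n + 1))) :
    descentSet π ⊆ range n := by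
  intro i hi
  simp only [descentSet, Finset.mem_filter, Finset.mem_range] at hi ⊢
  obtain ⟨-, h, -⟩ := hi
  omega

lemma pow_odes_mul_pow_edes (p q : ℝ) {n : ℕ} (π : Equiv.Perm (Fin (n + 1))) :
    p ^ odes π * q ^ edes π =
      descentWeight (fun i => if Even i then p else q) (fun _ => 1) π := by
  have hw : descentWeight (fun i => if Even i then p else q) (fun _ => 1) π =
      ∏ i ∈ descentSet π, if Even i then p else q := by
    rw [← Finset.inter_eq_right.2 (descentSet_subset_range π), ← Finset.prod_ite_mem,
      ← Fin.prod_univ_eq_prod_range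
        (fun i => if i ∈ descentSet π then (if Even i then p else q) else 1)]
    simp only [mem_descentSet_iff, descentWeight]
  rw [hw, Finset.prod_ite, Finset.prod_const, Finset.prod_const]
  simp only [odes, edes, Nat.not_even_iff_odd]

lemma refinedEulerian_succ (n : ℕ) (p q : ℝ) :
    refinedEulerian (n + 1) p q = ∑ j ∈ range (n + 1),
      lastValueWeight (fun i => if Even i then p else q) (fun _ => 1) n j := by
  rw [refinedEulerian, ← sum_descentWeight]
  exact Finset.sum_congr rfl fun π _ => pow_odes_mul_pow_edes p q π

open scoped Classical in
lemma indicator_isAlternating_revPerm_mul {n : ℕ} (π : Equiv.Perm (Fin (n + 1))) :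
    (if IsAlternating ((Fin.revPerm : Equiv.Perm (Fin (n + 1))) * π) then (1 : ℝ) else 0) =
      descentWeight (fun i => if Even i then 0 else 1) (fun i => if Even i then 1 else 0) π := by
  set ρ : Equiv.Perm (Fin (n + 1)) := Fin.revPerm * π with hρ
  have hw : ∀ i : Fin n,
      (if π i.succ < π i.castSucc then (if Even (i : ℕ) then (0 : ℝ) else 1)
        else if Even (i : ℕ) then 1 else 0) =
      if (ρ i.succ < ρ i.castSucc ↔ Even (i : ℕ)) then 1 else 0 := by
    intro i
    have hne : π i.succ ≠ π i.castSucc := fun h =>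
      i.castSucc_lt_succ.ne' (π.injective h)
    have hrev : ρ i.succ < ρ i.castSucc ↔
        ¬ π i.succ < π i.castSucc := by
      simp only [hρ, Equiv.Perm.mul_apply, Fin.revPerm_apply, Fin.rev_lt_rev, not_lt]
      exact ⟨le_of_lt, fun h => lt_of_le_of_ne h hne.symm⟩
    simp only [hrev]
    by_cases h1 : π i.succ < π i.castSucc <;> by_cases h2 : Even (i : ℕ) <;> simp [h1, h2]
  have halt : IsAlternating ρ ↔ ∀ i : Fin n,
      (ρ i.succ < ρ i.castSucc ↔ Even (i : ℕ)) :=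
    ⟨fun h i => h i (by omega), fun h i hi => h ⟨i, by omega⟩⟩
  simp only [descentWeight, hw, Finset.prod_boole, Finset.mem_univ, true_imp_iff, halt]

/-- The number of up-down permutations of `Fin (n + 1)` with a given last value. -/
noncomputable abbrev upDownWeight : ℕ → ℕ → ℝ :=
  lastValueWeight (fun i => if Even i then 0 else 1) (fun i => if Even i then 1 else 0)

lemma eulerNumber_succ (n : ℕ) :
    (eulerNumber (n + 1) : ℝ) = ∑ j ∈ range (n + 1), upDownWeight n j := by
  rw [← sum_descentWeight, eulerNumber, Finset.natCast_card_filter,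
    ← Equiv.sum_comp (Equiv.mulLeft (Fin.revPerm : Equiv.Perm (Fin (n + 1))))]
  exact Finset.sum_congr rfl fun π _ => indicator_isAlternating_revPerm_mul π

/-- The total weight of `f` after `r` further descents. -/
def chooseMoment (m r : ℕ) (f : ℕ → ℝ) : ℝ :=
  ∑ i ∈ range m, ((i + r).choose r : ℝ) * f i

lemma chooseMoment_zero_right (m : ℕ) (f : ℕ → ℝ) :
    chooseMoment m 0 f = ∑ i ∈ range m, f i := by
  simp [chooseMoment]

lemma chooseMoment_transfer (m r : ℕ) (d a : ℝ) (f : ℕ → ℝ) :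
    chooseMoment (m + 1) r (transfer m d a f) =
      (d - a) * chooseMoment m (r + 1) f +
        a * ((m + r + 1).choose (r + 1) : ℝ) * chooseMoment m 0 f := by
  have key : ∀ i ∈ range m, ∑ j ∈ range (m + 1),
      ((j + r).choose r : ℝ) * (if j ≤ i then d else a) =
      (d - a) * ((i + (r + 1)).choose (r + 1) : ℝ) + a * ((m + r + 1).choose (r + 1) : ℝ) := by
    intro i hi
    have hi' := Finset.mem_range.1 hi
    have h1 : ∀ k : ℕ, ∑ j ∈ range (k + 1), ((j + r).choose r : ℝ) =
        ((k + r + 1).choose (r + 1) : ℝ) := fun k => by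
      exact_mod_cast Nat.sum_range_add_choose k r
    have h2 : ∀ j : ℕ, ((j + r).choose r : ℝ) * (if j ≤ i then d else a) =
        (d - a) * (if j ≤ i then ((j + r).choose r : ℝ) else 0) + a * ((j + r).choose r : ℝ) := by
      intro j
      split_ifs <;> ring
    have h3 : (range (m + 1)).filter (fun j => j ≤ i) = range (i + 1) := by
      ext j
      simp only [Finset.mem_filter, Finset.mem_range]
      omega
    rw [Finset.sum_congr rfl fun j _ => h2 j, Finset.sum_add_distrib, ← Finset.mul_sum,
      ← Finset.mul_sum, ← Finset.sum_filter, h3, h1, h1, add_assoc i]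
  simp only [chooseMoment, transfer, Finset.mul_sum]
  rw [Finset.sum_comm, ← Finset.sum_add_distrib]
  refine Finset.sum_congr rfl fun i hi => ?_
  rw [Finset.sum_congr rfl fun j _ => (mul_assoc _ _ _).symm, ← Finset.sum_mul, key i hi]
  simp
  ring

lemma transfer_signed_symm {m : ℕ} {f : ℕ → ℝ} {ε : ℝ}
    (hf : ∀ i < m, f (m - 1 - i) = ε * f i) (j : ℕ) (hj : j < m + 1) :
    transfer m (-1) 1 f (m + 1 - 1 - j) = -ε * transfer m (-1) 1 f j := by
  simp only [transfer]
  rw [← Finset.sum_range_reflect, Finset.mul_sum]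
  refine Finset.sum_congr rfl fun i hi => ?_
  have hi' := Finset.mem_range.1 hi
  rw [hf i hi']
  by_cases h : j ≤ i
  · rw [if_neg (by omega), if_pos h]
    ring
  · rw [if_pos (by omega), if_neg h]
    ring

/-- The distribution of the last value after appending `k` letters to the distribution `f` on
`range m`, every descent being weighted by `-1`. -/
def signedTransfer (m : ℕ) (f : ℕ → ℝ) : ℕ → ℕ → ℝ
  | 0 => f
  | k + 1 => transfer (m + k) (-1) 1 (signedTransfer m f k)

lemma signedTransfer_succ' (m : ℕ) (f : ℕ → ℝ) (k : ℕ) :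
    signedTransfer m f (k + 1) = signedTransfer (m + 1) (transfer m (-1) 1 f) k := by
  induction k with
  | zero => rfl
  | succ k ih =>
    rw [signedTransfer, ih, signedTransfer]
    congr 1
    ring

lemma signedTransfer_one_symm (m k : ℕ) :
    ∀ i < m + k, signedTransfer m (fun _ => 1) k (m + k - 1 - i) =
      (-1) ^ k * signedTransfer m (fun _ => 1) k i := by
  induction k with
  | zero => simp [signedTransfer]
  | succ k ih =>
    intro i hi
    rw [pow_succ, mul_neg_one]
    exact transfer_signed_symm ih i hi

lemma sum_signedTransfer_one (m k : ℕ) (hk : Odd k) :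
    ∑ i ∈ range (m + k), signedTransfer m (fun _ => 1) k i = 0 := by
  have h := Finset.sum_range_reflect (signedTransfer m (fun _ => 1) k) (m + k)
  rw [Finset.sum_congr rfl fun i hi => signedTransfer_one_symm m k i (Finset.mem_range.1 hi),
    ← Finset.mul_sum, hk.neg_one_pow] at h
  linarith

lemma signedTransfer_linear (m : ℕ) (x y : ℝ) (f g : ℕ → ℝ) (k j : ℕ) :
    signedTransfer m (fun i => x * f i + y * g i) k j =
      x * signedTransfer m f k j + y * signedTransfer m g k j := by
  induction k generalizing j with
  | zero => rfl
  | succ k ih =>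
    simp only [signedTransfer, transfer, ih, Finset.mul_sum, ← Finset.sum_add_distrib]
    refine Finset.sum_congr rfl fun i _ => ?_
    ring

lemma transfer_eq_signed (m : ℕ) (p : ℝ) (f : ℕ → ℝ) :
    transfer m p 1 f = fun j => ((p + 1) / 2 * ∑ i ∈ range m, f i) * 1 +
      (1 - p) / 2 * transfer m (-1) 1 f j := by
  funext j
  simp only [transfer, Finset.mul_sum, Finset.sum_mul, ← Finset.sum_add_distrib]
  refine Finset.sum_congr rfl fun i _ => ?_
  split_ifs <;> ring

lemma sum_signedTransfer_lastValueWeight (p : ℝ) (k r : ℕ) :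
    ∑ j ∈ range (2 * k + 1 + 2 * r), signedTransfer (2 * k + 1)
        (lastValueWeight (fun i => if Even i then p else -1) (fun _ => 1) (2 * k)) (2 * r) j =
      ((1 - p) / 2) ^ k * ∑ j ∈ range (2 * k + 1 + 2 * r),
        signedTransfer 1 (fun _ => 1) (2 * (k + r)) j := by
  induction k generalizing r with
  | zero => simp [lastValueWeight]
  | succ k ih =>
    have hodd : ¬ Even (2 * k + 1) := by simp
    set F := lastValueWeight (fun i => if Even i then p else -1) (fun _ => 1) (2 * k) with hF
    have hstep : lastValueWeight (fun i => if Even i then p else -1) (fun _ => 1) (2 * (k + 1)) =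
        transfer (2 * k + 2) (-1) 1 (transfer (2 * k + 1) p 1 F) := by
      rw [show 2 * (k + 1) = 2 * k + 1 + 1 by ring, lastValueWeight, lastValueWeight, if_neg hodd,
        if_pos (even_two_mul k)]
    have h0 := sum_signedTransfer_one (2 * k + 2) (2 * r + 1) (odd_two_mul_add_one r)
    have h1 := ih (r + 1)
    rw [show 2 * (r + 1) = 2 * r + 1 + 1 by ring, signedTransfer_succ',
      show 2 * k + 1 + (2 * r + 1 + 1) = 2 * k + 2 + (2 * r + 1) by ring] at h1
    rw [hstep, show 2 * (k + 1) + 1 + 2 * r = 2 * k + 2 + (2 * r + 1) by ring,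
      show 2 * (k + 1) + 1 = 2 * k + 2 + 1 by ring, ← signedTransfer_succ', transfer_eq_signed]
    simp only [signedTransfer_linear, Finset.sum_add_distrib, ← Finset.mul_sum, h0]
    rw [h1, show k + (r + 1) = k + 1 + r by ring]
    ring

lemma refinedEulerian_odd_eq_signed (n : ℕ) (p : ℝ) :
    refinedEulerian (2 * n + 1) p (-1) =
      ((1 - p) / 2) ^ n * ∑ j ∈ range (2 * n + 1), signedTransfer 1 (fun _ => 1) (2 * n) j := by
  rw [refinedEulerian_succ]
  exact sum_signedTransfer_lastValueWeight p n 0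

lemma chooseMoment_signedTransfer (n r : ℕ) :
    chooseMoment (n + 1) r (signedTransfer 1 (fun _ => 1) n) =
      (-2) ^ n + ∑ k ∈ range n, (-2) ^ (n - 1 - k) * ((n + r + 1).choose (k + 1) : ℝ) *
        ∑ j ∈ range (k + 1), signedTransfer 1 (fun _ => 1) k j := by
  induction n generalizing r with
  | zero => simp [chooseMoment, signedTransfer]
  | succ n ih =>
    rw [signedTransfer, add_comm 1 n, chooseMoment_transfer, ih, Finset.sum_range_succ,
      chooseMoment_zero_right, mul_add, Finset.mul_sum,
      ← Nat.choose_symm_of_eq_add (show n + 1 + r + 1 = n + 1 + (r + 1) by ring), pow_succ,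
      add_assoc]
    congr 1
    · ring
    congr 1
    · refine Finset.sum_congr rfl fun k hk => ?_
      have hk' := Finset.mem_range.1 hk
      rw [show n + 1 - 1 - k = n - 1 - k + 1 by omega,
        show n + 1 + r + 1 = n + (r + 1) + 1 by ring, pow_succ]
      ring
    · simp

lemma chooseMoment_alternating (n r : ℕ) :
    chooseMoment (2 * n + 1) r (upDownWeight (2 * n)) =
      (-1) ^ n + ∑ k ∈ range n, (-1) ^ (n - 1 - k) * ((2 * n + r + 1).choose (2 * k + 1) : ℝ) *
        eulerNumber (2 * k + 1) := by
  induction n generalizing r with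
  | zero => simp [chooseMoment, lastValueWeight]
  | succ n ih =>
    have hodd : ¬ Even (2 * n + 1) := by simp
    rw [show 2 * (n + 1) = 2 * n + 1 + 1 by ring, upDownWeight, lastValueWeight, lastValueWeight,
      if_neg hodd, if_neg hodd, if_pos (even_two_mul n), if_pos (even_two_mul n),
      chooseMoment_transfer, chooseMoment_transfer, ih, Finset.sum_range_succ, chooseMoment_zero_right,
      ← eulerNumber_succ, ← Nat.choose_symm_of_eq_add
      (show 2 * n + 1 + (r + 1) + 1 = 2 * n + 1 + (r + 1 + 1) by ring)]
    have hs : ∀ k ∈ range n, (-1 : ℝ) ^ (n + 1 - 1 - k) *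
        ((2 * n + 1 + 1 + r + 1).choose (2 * k + 1) : ℝ) * eulerNumber (2 * k + 1) =
        -((-1) ^ (n - 1 - k) * ((2 * n + (r + 1 + 1) + 1).choose (2 * k + 1) : ℝ) *
          eulerNumber (2 * k + 1)) := by
      intro k hk
      have hk' := Finset.mem_range.1 hk
      rw [show n + 1 - 1 - k = n - 1 - k + 1 by omega,
        show 2 * n + 1 + 1 + r + 1 = 2 * n + (r + 1 + 1) + 1 by ring, pow_succ]
      ring
    rw [Finset.sum_congr rfl hs, Finset.sum_neg_distrib,
      show 2 * n + 1 + 1 + r + 1 = 2 * n + 1 + (r + 1) + 1 by ring]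
    simp
    ring

lemma sum_range_two_mul_add_two (g : ℕ → ℂ) (hg : ∀ k, g (2 * k) = 0) (n : ℕ) :
    ∑ k ∈ range (2 * n + 2), g k = ∑ k ∈ range (n + 1), g (2 * k + 1) := by
  induction n with
  | zero => simpa [Finset.sum_range_succ] using hg 0
  | succ n ih =>
    rw [show 2 * (n + 1) + 2 = 2 * n + 2 + 1 + 1 by ring, Finset.sum_range_succ,
      Finset.sum_range_succ, ih, Finset.sum_range_succ _ (n + 1),
      show 2 * n + 2 = 2 * (n + 1) by ring, hg, add_zero]
    rfl

/-- The exponential generating function of a sequence. -/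
noncomputable def egf (u : ℕ → ℂ) : PowerSeries ℂ :=
  PowerSeries.mk fun n => u n / n.factorial

lemma coeff_egf (u : ℕ → ℂ) (n : ℕ) : PowerSeries.coeff n (egf u) = u n / n.factorial :=
  PowerSeries.coeff_mk _ _

lemma egf_mul (u v : ℕ → ℂ) :
    egf u * egf v = egf fun n => ∑ k ∈ range (n + 1), (n.choose k : ℂ) * (u k * v (n - k)) := by
  ext n
  rw [PowerSeries.coeff_mul, coeff_egf, Finset.Nat.sum_antidiagonal_eq_sum_range_succ_mk,
    Finset.sum_div]
  refine Finset.sum_congr rfl fun k hk => ?_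
  have hk' : k ≤ n := Nat.lt_succ_iff.1 (Finset.mem_range.1 hk)
  have h1 : (n.factorial : ℂ) ≠ 0 := by exact_mod_cast n.factorial_ne_zero
  have h2 : (k.factorial : ℂ) ≠ 0 := by exact_mod_cast k.factorial_ne_zero
  have h3 : ((n - k).factorial : ℂ) ≠ 0 := by exact_mod_cast (n - k).factorial_ne_zero
  rw [coeff_egf, coeff_egf, Nat.cast_choose ℂ hk']
  field_simp

lemma egf_pow_mul_egf_pow (x y : ℂ) :
    egf (fun n => x ^ n) * egf (fun n => y ^ n) = egf fun n => (x + y) ^ n := by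
  rw [egf_mul]
  congr 1
  funext n
  rw [add_pow]
  exact Finset.sum_congr rfl fun k _ => mul_comm _ _

lemma egf_zero_pow : egf (fun n => (0 : ℂ) ^ n) = 1 := by
  ext n
  rcases n with _ | n <;> simp [coeff_egf, PowerSeries.coeff_one]

/-- The sequence `A_n(-1)` of alternating sums over all permutations, with `0` at `n = 0`. -/
def signedCount : ℕ → ℝ
  | 0 => 0
  | n + 1 => ∑ j ∈ range (n + 1), signedTransfer 1 (fun _ => 1) n j

/-- The Euler numbers of odd index, with `0` at even indices. -/
noncomputable def tangentNumber (n : ℕ) : ℝ :=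
  if Even n then 0 else eulerNumber n

lemma signedCount_recurrence (n : ℕ) :
    ∑ k ∈ range (n + 1), (n.choose k : ℝ) * (signedCount k * (-2) ^ (n - k)) + signedCount n =
      0 ^ n - (-2) ^ n := by
  rcases n with _ | n
  · simp [signedCount]
  · have h := chooseMoment_signedTransfer n 0
    rw [chooseMoment_zero_right, ← signedCount] at h
    rw [Finset.sum_range_succ, Finset.sum_range_succ']
    have hs : ∀ k ∈ range n,
        ((n + 1).choose (k + 1) : ℝ) * (signedCount (k + 1) * (-2) ^ (n + 1 - (k + 1))) =
        -2 * ((-2) ^ (n - 1 - k) * ((n + 0 + 1).choose (k + 1) : ℝ) *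
          ∑ j ∈ range (k + 1), signedTransfer 1 (fun _ => 1) k j) := by
      intro k hk
      have hk' := Finset.mem_range.1 hk
      rw [show n + 1 - (k + 1) = n - 1 - k + 1 by omega, signedCount, pow_succ]
      ring
    rw [Finset.sum_congr rfl hs, ← Finset.mul_sum, ← sub_eq_iff_eq_add'.2 h]
    simp [signedCount]
    ring

lemma egf_signedCount :
    egf (fun n => (Complex.I ^ n * signedCount n : ℂ)) *
        (egf (fun n => Complex.I ^ n) + egf (fun n => (-Complex.I) ^ n)) =
      egf (fun n => Complex.I ^ n) - egf (fun n => (-Complex.I) ^ n) := by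
  set B := egf (fun n => (Complex.I ^ n * signedCount n : ℂ)) with hB
  have key : B * egf (fun n => (-Complex.I + -Complex.I) ^ n) + B =
      1 - egf (fun n => (-Complex.I + -Complex.I) ^ n) := by
    rw [hB, egf_mul, ← egf_zero_pow]
    ext n
    rw [map_add, map_sub, coeff_egf, coeff_egf, coeff_egf, coeff_egf, ← add_div, ← sub_div]
    congr 1
    have h : ∑ k ∈ range (n + 1), (n.choose k : ℂ) * ((signedCount k : ℂ) * (-2) ^ (n - k)) +
        (signedCount n : ℂ) = 0 ^ n - (-2) ^ n := by
      exact_mod_cast congrArg (fun x : ℝ => (x : ℂ)) (signedCount_recurrence n)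
    rw [show (-Complex.I + -Complex.I) = Complex.I * (-2) by ring,
      show (0 : ℂ) ^ n = (Complex.I * 0) ^ n by simp, mul_pow, mul_pow, ← mul_sub, ← h, mul_add,
      Finset.mul_sum]
    congr 1
    refine Finset.sum_congr rfl fun k hk => ?_
    rw [mul_pow, ← pow_mul_pow_sub Complex.I (Finset.mem_range_succ_iff.1 hk)]
    ring
  have hI : egf (fun n => Complex.I ^ n) * egf (fun n => (-Complex.I) ^ n) = 1 := by
    rw [egf_pow_mul_egf_pow, add_neg_cancel, egf_zero_pow]
  rw [← egf_pow_mul_egf_pow] at key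
  linear_combination egf (fun n => Complex.I ^ n) * key -
    (B + 1) * egf (fun n => (-Complex.I) ^ n) * hI

lemma eulerNumber_recurrence (n : ℕ) :
    ∑ k ∈ range (n + 1), (-1) ^ (n - k) * ((2 * n + 1).choose (2 * k + 1) : ℝ) *
      eulerNumber (2 * k + 1) = (-1) ^ n := by
  have h := chooseMoment_alternating n 0
  rw [chooseMoment_zero_right, ← eulerNumber_succ] at h
  have hs : ∀ k ∈ range n, (-1) ^ (n - k) * ((2 * n + 1).choose (2 * k + 1) : ℝ) *
      eulerNumber (2 * k + 1) = -((-1) ^ (n - 1 - k) * ((2 * n + 0 + 1).choose (2 * k + 1) : ℝ) *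
      eulerNumber (2 * k + 1)) := by
    intro k hk
    have hk' := Finset.mem_range.1 hk
    rw [show n - k = n - 1 - k + 1 by omega, pow_succ]
    ring
  rw [Finset.sum_range_succ, Finset.sum_congr rfl hs, Finset.sum_neg_distrib, h]
  simp

lemma I_pow_add_neg_I_pow_odd {n : ℕ} (hn : Odd n) :
    Complex.I ^ n + (-Complex.I) ^ n = 0 := by
  rw [hn.neg_pow, add_neg_cancel]

lemma I_pow_add_neg_I_pow_two_mul (n : ℕ) :
    Complex.I ^ (2 * n) + (-Complex.I) ^ (2 * n) = 2 * (-1) ^ n := by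
  rw [(even_two_mul n).neg_pow, pow_mul, Complex.I_sq]
  ring

lemma tangentNumber_recurrence (n : ℕ) :
    ∑ k ∈ range (n + 1), (n.choose k : ℂ) *
      ((tangentNumber k : ℂ) * (Complex.I ^ (n - k) + (-Complex.I) ^ (n - k))) =
      -Complex.I * (Complex.I ^ n - (-Complex.I) ^ n) := by
  rcases Nat.even_or_odd n with hn | hn
  · rw [hn.neg_pow, sub_self, mul_zero]
    refine Finset.sum_eq_zero fun k hk => ?_
    rcases Nat.even_or_odd k with hk' | hk'
    · simp [tangentNumber, hk']
    · rw [I_pow_add_neg_I_pow_odd (Nat.Even.sub_odd (Finset.mem_range_succ_iff.1 hk) hn hk')]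
      simp
  · obtain ⟨n, rfl⟩ := hn
    have h : ∑ k ∈ range (n + 1), (-1) ^ (n - k) * ((2 * n + 1).choose (2 * k + 1) : ℂ) *
        (eulerNumber (2 * k + 1) : ℂ) = (-1) ^ n := by
      exact_mod_cast congrArg (fun x : ℝ => (x : ℂ)) (eulerNumber_recurrence n)
    rw [sum_range_two_mul_add_two _ (fun k => by simp [tangentNumber]),
      (odd_two_mul_add_one n).neg_pow, pow_succ, pow_mul, Complex.I_sq]
    have hr : -Complex.I * ((-1) ^ n * Complex.I - -((-1) ^ n * Complex.I)) = 2 * (-1) ^ n := by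
      linear_combination -2 * (-1) ^ n * Complex.I_sq
    rw [hr, ← h, Finset.mul_sum]
    refine Finset.sum_congr rfl fun k _ => ?_
    rw [show 2 * n + 1 - (2 * k + 1) = 2 * (n - k) by omega, I_pow_add_neg_I_pow_two_mul,
      tangentNumber, if_neg (by simp)]
    push_cast
    ring

lemma egf_tangentNumber :
    egf (fun n => (tangentNumber n : ℂ)) *
        (egf (fun n => Complex.I ^ n) + egf (fun n => (-Complex.I) ^ n)) =
      PowerSeries.C (-Complex.I) *
        (egf (fun n => Complex.I ^ n) - egf (fun n => (-Complex.I) ^ n)) := by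
  have hadd : egf (fun n => Complex.I ^ n) + egf (fun n => (-Complex.I) ^ n) =
      egf fun n => Complex.I ^ n + (-Complex.I) ^ n := by
    ext n
    simp only [map_add, coeff_egf, add_div]
  rw [hadd, egf_mul]
  ext n
  rw [PowerSeries.coeff_C_mul, map_sub, coeff_egf, coeff_egf, coeff_egf, ← sub_div,
    tangentNumber_recurrence, mul_div_assoc]

lemma I_pow_mul_signedCount (n : ℕ) :
    Complex.I ^ n * (signedCount n : ℂ) = Complex.I * (tangentNumber n : ℂ) := by
  have hne : egf (fun n => Complex.I ^ n) + egf (fun n => (-Complex.I) ^ n) ≠ 0 := by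
    intro h
    have h0 := congrArg (PowerSeries.coeff 0) h
    rw [map_add, coeff_egf, coeff_egf] at h0
    norm_num at h0
  have hC : (PowerSeries.C Complex.I) * PowerSeries.C (-Complex.I) = (1 : PowerSeries ℂ) := by
    rw [← map_mul, mul_neg, Complex.I_mul_I, neg_neg, map_one]
  have h : egf (fun n => (Complex.I ^ n * signedCount n : ℂ)) =
      PowerSeries.C Complex.I * egf (fun n => (tangentNumber n : ℂ)) := by
    apply mul_right_cancel₀ hne
    rw [egf_signedCount, mul_assoc, egf_tangentNumber, ← mul_assoc, hC, one_mul]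
  have hn := congrArg (PowerSeries.coeff n) h
  rw [PowerSeries.coeff_C_mul, coeff_egf, coeff_egf, ← mul_div_assoc] at hn
  exact (div_left_inj' (by exact_mod_cast n.factorial_ne_zero)).1 hn

lemma signedCount_odd (n : ℕ) :
    signedCount (2 * n + 1) = (-1) ^ n * (eulerNumber (2 * n + 1) : ℝ) := by
  have h := I_pow_mul_signedCount (2 * n + 1)
  rw [pow_succ, pow_mul, Complex.I_sq, tangentNumber, if_neg (by simp)] at h
  have h' : (-1 : ℂ) ^ n * (signedCount (2 * n + 1) : ℂ) = ((eulerNumber (2 * n + 1) : ℝ) : ℂ) :=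
    mul_left_cancel₀ Complex.I_ne_zero (by linear_combination h)
  have h'' : (-1 : ℝ) ^ n * signedCount (2 * n + 1) = eulerNumber (2 * n + 1) := by
    exact_mod_cast h'
  rw [← h'', ← mul_assoc, ← mul_pow]
  simp

/-- A_{2n+1}(p,−1) = ((p−1)/2)^n E_{2n+1}. -/
theorem refinedEulerian_odd_at_neg_one (n : ℕ) (p : ℝ) :
    refinedEulerian (2 * n + 1) p (-1) = ((p - 1) / 2) ^ n * (eulerNumber (2 * n + 1) : ℝ) := by
  rw [refinedEulerian_odd_eq_signed, ← signedCount, signedCount_odd, ← mul_assoc, ← mul_pow]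
  ring
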